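/- arXiv:2106.14576 — 2 statements merged into one kernel-verified Lean document; each statement's English description precedes it below -/
import Mathlib

section
/- Let u and w be minimizers of J in the open unit ball B₁, let 0 < ε < 1, and assume u(x) ≥ w(x) for all x ∈ ℝⁿ \ B_{1−ε}. Then u ≥ w everywhere on ℝⁿ. -/
open MeasureTheory Metric Set Filter ENNReal NNReal

/-- The Alt–Caffarelli energy `J_D(u) = ∫_D (‖∇u‖² + 𝟙_{u>0})`, valued in `[0,∞]`. -/
noncomputable def JE {n : ℕ} (D : Set (EuclideanSpace ℝ (Fin n)))
    (u : EuclideanSpace ℝ (Fin n) → ℝ) : ℝ≥0∞ :=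
  ∫⁻ x in D, ((‖gradient u x‖₊ : ℝ≥0∞) ^ 2 + if 0 < u x then 1 else 0)

/-- `u` is a (nonnegative, locally Lipschitz) minimizer of `J` in the open set `Ω`:
for every nonnegative locally Lipschitz competitor `v` with `{v ≠ u}` a bounded subset
of `Ω`, one has `J_{Ω ∩ B}(u) ≤ J_{Ω ∩ B}(v)` for every open ball `B ⊇ {v ≠ u}`. -/
def IsMinimizer {n : ℕ} (Ω : Set (EuclideanSpace ℝ (Fin n)))
    (u : EuclideanSpace ℝ (Fin n) → ℝ) : Prop :=
  (∀ x, 0 ≤ u x) ∧ LocallyLipschitz u ∧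
  ∀ v : EuclideanSpace ℝ (Fin n) → ℝ, (∀ x, 0 ≤ v x) → LocallyLipschitz v →
    Bornology.IsBounded {x | v x ≠ u x} → {x | v x ≠ u x} ⊆ Ω →
    ∀ (c : EuclideanSpace ℝ (Fin n)) (r : ℝ), {x | v x ≠ u x} ⊆ Metric.ball c r →
      JE (Ω ∩ Metric.ball c r) u ≤ JE (Ω ∩ Metric.ball c r) v

namespace AC


variable {n : ℕ}

lemma ae_diff {u : (EuclideanSpace ℝ (Fin n)) → ℝ} (hu : LocallyLipschitz u) :
    ∀ᵐ x, DifferentiableAt ℝ u x := by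
  have h : ∀ N : ℕ, ∀ᵐ x : EuclideanSpace ℝ (Fin n), x ∈ ball (0 : EuclideanSpace ℝ (Fin n)) N → DifferentiableAt ℝ u x := by
    intro N
    obtain ⟨K, hK⟩ := (hu.locallyLipschitzOn (s := closedBall (0 : EuclideanSpace ℝ (Fin n)) N)).exists_lipschitzOnWith_of_compact
      (isCompact_closedBall 0 N)
    filter_upwards [(hK.mono ball_subset_closedBall).ae_differentiableWithinAt_of_mem (μ := volume)] with x hx hxb
    exact (hx hxb).differentiableAt (isOpen_ball.mem_nhds hxb)
  filter_upwards [ae_all_iff.2 h] with x hx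
  obtain ⟨N, hN⟩ := exists_nat_gt ‖x‖
  exact hx N (by simpa using hN)

lemma norm_grad (u : (EuclideanSpace ℝ (Fin n)) → ℝ) (x : EuclideanSpace ℝ (Fin n)) : ‖gradient u x‖ = ‖fderiv ℝ u x‖ := by
  simp [gradient]

lemma inner_grad (u : (EuclideanSpace ℝ (Fin n)) → ℝ) (x y : EuclideanSpace ℝ (Fin n)) : inner ℝ (gradient u x) y = fderiv ℝ u x y := by
  simp [gradient]

lemma meas_grad (u : (EuclideanSpace ℝ (Fin n)) → ℝ) : Measurable (gradient u) := by
  unfold gradient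
  exact (LinearIsometryEquiv.continuous _).measurable.comp (measurable_fderiv ℝ u)

lemma grad_bound {u : (EuclideanSpace ℝ (Fin n)) → ℝ} (hu : LocallyLipschitz u) (R : ℝ) :
    ∃ K : ℝ, ∀ x ∈ ball (0 : EuclideanSpace ℝ (Fin n)) R, ‖gradient u x‖ ≤ K := by
  obtain ⟨K, hK⟩ := (hu.locallyLipschitzOn (s := closedBall (0 : EuclideanSpace ℝ (Fin n)) R)).exists_lipschitzOnWith_of_compact
      (isCompact_closedBall 0 R)
  refine ⟨K, fun x hx => ?_⟩
  rw [norm_grad]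
  exact norm_fderiv_le_of_lipschitzOn ℝ (isOpen_ball.mem_nhds hx) (hK.mono ball_subset_closedBall)

/-- energy density -/
noncomputable def e (u : (EuclideanSpace ℝ (Fin n)) → ℝ) (x : EuclideanSpace ℝ (Fin n)) : ℝ := ‖gradient u x‖ ^ 2 + if 0 < u x then 1 else 0

lemma e_nonneg (u : (EuclideanSpace ℝ (Fin n)) → ℝ) (x : EuclideanSpace ℝ (Fin n)) : 0 ≤ e u x := by
  unfold e; split_ifs <;> positivity

lemma meas_e {u : (EuclideanSpace ℝ (Fin n)) → ℝ} (hu : LocallyLipschitz u) : Measurable (e u) := by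
  unfold e
  exact ((meas_grad u).norm.pow_const 2).add
    (Measurable.ite (measurableSet_lt measurable_const hu.continuous.measurable) measurable_const measurable_const)

lemma integrableOn_bdd {f : (EuclideanSpace ℝ (Fin n)) → ℝ} (hf : Measurable f) {s : Set (EuclideanSpace ℝ (Fin n))} (hs : MeasurableSet s)
    (hsb : Bornology.IsBounded s)
    (K : ℝ) (h : ∀ x ∈ s, ‖f x‖ ≤ K) : IntegrableOn f s := by
  have := hsb.measure_lt_top (μ := volume)
  exact IntegrableOn.of_bound this hf.aestronglyMeasurable K ((ae_restrict_iff' hs).2 (ae_of_all _ h))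

lemma int_e {u : (EuclideanSpace ℝ (Fin n)) → ℝ} (hu : LocallyLipschitz u) : IntegrableOn (e u) (ball 0 1) := by
  obtain ⟨K, hK⟩ := grad_bound hu 1
  refine integrableOn_bdd (meas_e hu) measurableSet_ball isBounded_ball (K ^ 2 + 1) fun x hx => ?_
  rw [Real.norm_of_nonneg (e_nonneg u x)]
  unfold e
  have := pow_le_pow_left₀ (norm_nonneg _) (hK x hx) 2
  split_ifs <;> linarith

lemma JE_eq {u : (EuclideanSpace ℝ (Fin n)) → ℝ} (hu : LocallyLipschitz u) :
    JE (ball 0 1) u = ENNReal.ofReal (∫ x in ball 0 1, e u x) := by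
  rw [ofReal_integral_eq_lintegral_ofReal (int_e hu) (ae_of_all _ (e_nonneg u))]
  unfold JE
  refine lintegral_congr fun x => ?_
  unfold e
  rw [ENNReal.ofReal_add (by positivity) (by split_ifs <;> norm_num), ENNReal.ofReal_pow (norm_nonneg _),
    ofReal_norm]
  congr 1
  split_ifs <;> simp

def Mn (u : (EuclideanSpace ℝ (Fin n)) → ℝ) : Prop :=
  (∀ x, 0 ≤ u x) ∧ LocallyLipschitz u ∧
  ∀ v : (EuclideanSpace ℝ (Fin n)) → ℝ, (∀ x, 0 ≤ v x) → LocallyLipschitz v → (∀ x, v x ≠ u x → x ∈ ball (0 : EuclideanSpace ℝ (Fin n)) 1) →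
    ∫ x in ball 0 1, e u x ≤ ∫ x in ball 0 1, e v x

lemma Mn_of {u : (EuclideanSpace ℝ (Fin n)) → ℝ} (hu : IsMinimizer (ball 0 1) u) : Mn u := by
  refine ⟨hu.1, hu.2.1, fun v hv hvl hd => ?_⟩
  have := hu.2.2 v hv hvl (isBounded_ball.subset hd) hd 0 1 hd
  rw [inter_self, JE_eq hu.2.1, JE_eq hvl] at this
  exact (ENNReal.ofReal_le_ofReal_iff (integral_nonneg (e_nonneg v))).1 this

lemma grad_eq {f g : (EuclideanSpace ℝ (Fin n)) → ℝ} {x : EuclideanSpace ℝ (Fin n)} (hle : ∀ y, f y ≤ g y) (hx : f x = g x)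
    (hf : DifferentiableAt ℝ f x) (hg : DifferentiableAt ℝ g x) : gradient f x = gradient g x := by
  have h : IsLocalMin (g - f) x := by
    refine Eventually.of_forall fun y => ?_
    simp [hx, hle]
  have := h.fderiv_eq_zero
  rw [fderiv_sub hg hf, sub_eq_zero] at this
  simp [gradient, this]

lemma grad_zero {f : (EuclideanSpace ℝ (Fin n)) → ℝ} {x : EuclideanSpace ℝ (Fin n)} (h0 : ∀ y, 0 ≤ f y) (hx : f x = 0) :
    gradient f x = 0 := by
  have h : IsLocalMin f x := by
    refine Eventually.of_forall fun y => ?_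
    simp [hx, h0]
  simp [gradient, h.fderiv_eq_zero]

lemma e_zero {f : (EuclideanSpace ℝ (Fin n)) → ℝ} {x : EuclideanSpace ℝ (Fin n)} (h0 : ∀ y, 0 ≤ f y) (hx : f x = 0) : e f x = 0 := by
  simp [e, grad_zero h0 hx, hx]

lemma e_maxmin {u w : (EuclideanSpace ℝ (Fin n)) → ℝ} (hu : LocallyLipschitz u) (hw : LocallyLipschitz w) :
    ∀ᵐ x, e (fun y => max (u y) (w y)) x + e (fun y => min (u y) (w y)) x = e u x + e w x := by
  filter_upwards [ae_diff hu, ae_diff hw, ae_diff (hu.max hw), ae_diff (hu.min hw)] with x h1 h2 h3 h4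
  rcases lt_trichotomy (u x) (w x) with h | h | h
  · have ev : ∀ᶠ y in nhds x, u y < w y := hu.continuous.continuousAt.eventually_lt hw.continuous.continuousAt h
    have e1 : (fun y => max (u y) (w y)) =ᶠ[nhds x] w := ev.mono fun y hy => max_eq_right hy.le
    have e2 : (fun y => min (u y) (w y)) =ᶠ[nhds x] u := ev.mono fun y hy => min_eq_left hy.le
    simp only [e, gradient, e1.fderiv_eq, e2.fderiv_eq, max_eq_right h.le, min_eq_left h.le]
    ring
  · have g1 := grad_eq (x := x) (fun y => le_max_left (u y) (w y)) (by simp [h]) h1 h3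
    have g2 := grad_eq (x := x) (fun y => le_max_right (u y) (w y)) (by simp [h]) h2 h3
    have g3 := grad_eq (x := x) (fun y => min_le_left (u y) (w y)) (by simp [h]) h4 h1
    simp only [e, g3, ← g1, g2.trans g1.symm, h, max_self, min_self]
  · have ev : ∀ᶠ y in nhds x, w y < u y := hw.continuous.continuousAt.eventually_lt hu.continuous.continuousAt h
    have e1 : (fun y => max (u y) (w y)) =ᶠ[nhds x] u := ev.mono fun y hy => max_eq_left hy.le
    have e2 : (fun y => min (u y) (w y)) =ᶠ[nhds x] w := ev.mono fun y hy => min_eq_right hy.le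
    simp only [e, gradient, e1.fderiv_eq, e2.fderiv_eq, max_eq_left h.le, min_eq_right h.le]

lemma Mn_max {u w : (EuclideanSpace ℝ (Fin n)) → ℝ} (hu : Mn u) (hw : Mn w)
    (h : ∀ x, u x < w x → x ∈ ball (0 : EuclideanSpace ℝ (Fin n)) 1) :
    Mn (fun y => max (u y) (w y)) ∧
      ∫ x in ball 0 1, e (fun y => max (u y) (w y)) x ≤ ∫ x in ball 0 1, e u x := by
  have hM := hu.2.1.max hw.2.1
  have hm := hu.2.1.min hw.2.1
  have key : ∫ x in ball 0 1, e (fun y => max (u y) (w y)) x ≤ ∫ x in ball 0 1, e u x := by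
    have h1 := hw.2.2 (fun y => min (u y) (w y)) (fun x => le_min (hu.1 x) (hw.1 x)) hm (by
      intro x hx
      refine h x ?_
      by_contra hc
      exact hx (min_eq_right (not_lt.1 hc)))
    have h2 := integral_congr_ae (ae_restrict_of_ae (s := ball (0 : EuclideanSpace ℝ (Fin n)) 1) (e_maxmin hu.2.1 hw.2.1))
    rw [integral_add (int_e hM) (int_e hm), integral_add (int_e hu.2.1) (int_e hw.2.1)] at h2
    linarith
  refine ⟨⟨fun x => (hu.1 x).trans (le_max_left _ _), hM, fun v hv hvl hd => key.trans ?_⟩, key⟩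
  refine hu.2.2 v hv hvl fun x hx => ?_
  by_cases hc : u x < w x
  · exact h x hc
  · refine hd x ?_
    simpa [max_eq_left (not_lt.1 hc)] using hx

lemma weak {u φ : (EuclideanSpace ℝ (Fin n)) → ℝ} (hu : Mn u) (hφ : LocallyLipschitz φ) {c M : ℝ} (hc : 0 < c)
    (hM : ∀ x, |φ x| ≤ M) (h : ∀ x, φ x ≠ 0 → x ∈ ball (0 : EuclideanSpace ℝ (Fin n)) 1 ∧ c ≤ u x) :
    ∫ x in ball (0 : EuclideanSpace ℝ (Fin n)) 1, inner ℝ (gradient u x) (gradient φ x) = 0 := by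
  set A := ∫ x in ball (0 : EuclideanSpace ℝ (Fin n)) 1, inner ℝ (gradient u x) (gradient φ x) with hA
  set B := ∫ x in ball (0 : EuclideanSpace ℝ (Fin n)) 1, ‖gradient φ x‖ ^ 2 with hB
  obtain ⟨K1, hK1⟩ := grad_bound hu.2.1 1
  obtain ⟨K2, hK2⟩ := grad_bound hφ 1
  have M0 : 0 ≤ M := (abs_nonneg _).trans (hM 0)
  have iA : IntegrableOn (fun x => inner ℝ (gradient u x) (gradient φ x)) (ball (0 : EuclideanSpace ℝ (Fin n)) 1) := by
    refine integrableOn_bdd ((meas_grad u).inner (meas_grad φ)) measurableSet_ball isBounded_ball (K1 * K2) fun x hx => ?_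
    exact (norm_inner_le_norm _ _).trans (mul_le_mul (hK1 x hx) (hK2 x hx) (norm_nonneg _)
      ((norm_nonneg _).trans (hK1 x hx)))
  have iB : IntegrableOn (fun x => ‖gradient φ x‖ ^ 2) (ball (0 : EuclideanSpace ℝ (Fin n)) 1) := by
    refine integrableOn_bdd ((meas_grad φ).norm.pow_const 2) measurableSet_ball isBounded_ball (K2 ^ 2) fun x hx => ?_
    rw [Real.norm_of_nonneg (by positivity)]
    exact pow_le_pow_left₀ (norm_nonneg _) (hK2 x hx) 2
  have main : ∀ s : ℝ, |s| * M < c → 0 ≤ 2 * s * A + s ^ 2 * B := by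
    intro s hs
    have hb : ∀ x, |s * φ x| < c := fun x => by
      rw [abs_mul]
      exact (mul_le_mul_of_nonneg_left (hM x) (abs_nonneg s)).trans_lt hs
    have pos : ∀ x, φ x ≠ 0 → 0 < u x + s * φ x := fun x hx => by
      have := (abs_lt.1 (hb x)).1
      have := (h x hx).2
      linarith
    have hl : LocallyLipschitz (fun x => u x + s * φ x) := by
      refine hu.2.1.add ?_
      have := (lipschitzWith_smul (β := ℝ) s).locallyLipschitz.comp hφ
      exact this
    have h1 := hu.2.2 (fun x => u x + s * φ x) (fun x => by
      by_cases hx : φ x = 0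
      · simp [hx, hu.1 x]
      · exact (pos x hx).le) hl (by
      intro x hx
      refine (h x ?_).1
      rintro h0
      simp [h0] at hx)
    have h2 : ∫ x in ball (0 : EuclideanSpace ℝ (Fin n)) 1, e (fun x => u x + s * φ x) x =
        ∫ x in ball (0 : EuclideanSpace ℝ (Fin n)) 1, (e u x + (2 * s * inner ℝ (gradient u x) (gradient φ x) + s ^ 2 * ‖gradient φ x‖ ^ 2)) := by
      refine integral_congr_ae (ae_restrict_of_ae ?_)
      filter_upwards [ae_diff hu.2.1, ae_diff hφ] with x d1 d2
      have hg : gradient (fun x => u x + s * φ x) x = gradient u x + s • gradient φ x := by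
        unfold gradient
        rw [fderiv_fun_add d1 (d2.const_mul s), fderiv_const_mul d2]
        simp
      have hi : (0 < u x + s * φ x) ↔ 0 < u x := by
        by_cases hx : φ x = 0
        · simp [hx]
        · exact ⟨fun _ => hc.trans_le (h x hx).2, fun _ => pos x hx⟩
      simp only [e, hg, hi, norm_add_sq_real, inner_smul_right, norm_smul, mul_pow, Real.norm_eq_abs, sq_abs]
      ring
    have iC : IntegrableOn (fun x => 2 * s * inner ℝ (gradient u x) (gradient φ x) +
        s ^ 2 * ‖gradient φ x‖ ^ 2) (ball (0 : EuclideanSpace ℝ (Fin n)) 1) := (iA.const_mul _).add (iB.const_mul _)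
    rw [h2, integral_add (int_e hu.2.1) iC,
      integral_add (iA.const_mul _) (iB.const_mul _), integral_const_mul, integral_const_mul] at h1
    linarith
  have B0 : 0 ≤ B := integral_nonneg fun x => by positivity
  by_contra hne
  -- choose s = -δ A
  obtain ⟨δ, hδ, hδ1, hδ2⟩ : ∃ δ : ℝ, 0 < δ ∧ δ * (|A| * M) < c ∧ δ * B < 2 := by
    refine ⟨min (c / (2 * (|A| * M + 1))) (1 / (B + 1)), by positivity, ?_, ?_⟩
    · have : min (c / (2 * (|A| * M + 1))) (1 / (B + 1)) * (|A| * M) ≤ c / (2 * (|A| * M + 1)) * (|A| * M) := by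
        gcongr; exact min_le_left _ _
      refine this.trans_lt ?_
      rw [div_mul_eq_mul_div, div_lt_iff₀ (by positivity)]
      have : 0 ≤ |A| * M := by positivity
      nlinarith
    · have : min (c / (2 * (|A| * M + 1))) (1 / (B + 1)) * B ≤ 1 / (B + 1) * B := by
        gcongr; exact min_le_right _ _
      refine this.trans_lt ?_
      rw [div_mul_eq_mul_div, div_lt_iff₀ (by positivity)]
      linarith
  have := main (-δ * A) (by rw [abs_mul, abs_neg, abs_of_pos hδ]; linarith)
  have hA2 : 0 < A ^ 2 := by positivity
  have e1 : 2 * (-δ * A) * A + (-δ * A) ^ 2 * B = δ * A ^ 2 * (δ * B - 2) := by ring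
  rw [e1] at this
  have h3 : 0 < δ * A ^ 2 := by positivity
  nlinarith

lemma trunc {f : (EuclideanSpace ℝ (Fin n)) → ℝ} (hf : LocallyLipschitz f) {C : Set (EuclideanSpace ℝ (Fin n))}
    (hC : ∀ x ∈ frontier C, f x = 0) : LocallyLipschitz (indicator Cᶜ f) := by
  intro x
  obtain ⟨K, t, ht, hK⟩ := hf x
  obtain ⟨r, hr, hrt⟩ := Metric.mem_nhds_iff.1 ht
  refine ⟨K, ball x r, ball_mem_nhds x hr, ?_⟩
  have key : ∀ a ∈ ball x r, ∀ b ∈ ball x r, a ∈ C → b ∉ C → |f b| ≤ K * dist a b := by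
    intro a ha b hb haC hbC
    obtain ⟨z, hz, hzf⟩ : ∃ z ∈ segment ℝ a b, z ∈ frontier C := by
      by_contra! hno
      have hcov : ∀ z ∈ segment ℝ a b, z ∈ interior C ∨ z ∈ (closure C)ᶜ := by
        intro z hz
        by_contra! hc
        exact hno z hz ⟨not_not.1 hc.2, hc.1⟩
      obtain ⟨z, -, hz1, hz2⟩ := (convex_segment (𝕜 := ℝ) a b).isPreconnected (interior C) (closure C)ᶜ
        isOpen_interior isClosed_closure.isOpen_compl hcov
        ⟨a, left_mem_segment ℝ a b, (hcov a (left_mem_segment ℝ a b)).resolve_right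
          (not_not_intro (subset_closure haC))⟩
        ⟨b, right_mem_segment ℝ a b, (hcov b (right_mem_segment ℝ a b)).resolve_left
          (fun h => hbC (interior_subset h))⟩
      exact hz2 (subset_closure (interior_subset hz1))
    have hzb : z ∈ ball x r := (convex_ball x r).segment_subset ha hb hz
    have h1 := hK.dist_le_mul b (hrt hb) z (hrt hzb)
    rw [hC z hzf, Real.dist_eq, sub_zero] at h1
    refine h1.trans ?_
    have := dist_add_dist_of_mem_segment hz
    have h0 : 0 ≤ dist a z := dist_nonneg
    rw [dist_comm b z]
    gcongr
    linarith
  refine LipschitzOnWith.of_dist_le_mul fun a ha b hb => ?_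
  by_cases haC : a ∈ C <;> by_cases hbC : b ∈ C
  · simp [haC, hbC]; positivity
  · simpa [haC, hbC, Real.dist_eq] using key a ha b hb haC hbC
  · simpa [haC, hbC, Real.dist_eq, dist_comm] using key b hb a ha hbC haC
  · simpa [haC, hbC] using hK.dist_le_mul a (hrt ha) b (hrt hb)

lemma empty_of {f g : (EuclideanSpace ℝ (Fin n)) → ℝ} (hf : LocallyLipschitz f) (hg : LocallyLipschitz g)
    (hf0 : ∀ x, 0 ≤ f x) (hfg : ∀ x, f x ≤ g x) {G : Set (EuclideanSpace ℝ (Fin n))} (hG : IsOpen G)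
    (hGb : G ⊆ ball 0 1) (heq : ∀ x ∉ G, f x = g x) (hz : ∀ x ∈ G, f x = 0)
    (hp : ∀ x ∈ G, 0 < g x) (hI : ∫ x in ball 0 1, e g x ≤ ∫ x in ball 0 1, e f x) : G = ∅ := by
  have h1 : ∀ᵐ x, e f x + indicator G (fun _ => (1:ℝ)) x ≤ e g x := by
    filter_upwards [ae_diff hf, ae_diff hg] with x d1 d2
    by_cases hx : x ∈ G
    · rw [e_zero hf0 (hz x hx)]
      simp [hx, e, hp x hx]
    · simp [hx, e, grad_eq hfg (heq x hx) d1 d2, heq x hx]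
  have fin : volume G < ⊤ := (isBounded_ball.subset hGb).measure_lt_top
  have iG : IntegrableOn (indicator G (fun _ => (1:ℝ))) (ball (0 : EuclideanSpace ℝ (Fin n)) 1) :=
    ((integrable_indicator_iff hG.measurableSet).2 (integrableOn_const fin.ne)).integrableOn
  have h2 := integral_mono_ae ((int_e hf).add iG) (int_e hg) (ae_restrict_of_ae h1)
  simp only [Pi.add_apply] at h2
  rw [integral_add (int_e hf) iG, setIntegral_indicator hG.measurableSet,
    inter_eq_right.2 hGb, setIntegral_const, smul_eq_mul, mul_one] at h2
  have h3 : volume.real G ≤ 0 := by linarith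
  have h4 : volume.real G = 0 := le_antisymm h3 measureReal_nonneg
  rw [measureReal_eq_zero_iff fin.ne] at h4
  exact hG.measure_eq_zero_iff volume |>.1 h4

lemma weak_ball {u : (EuclideanSpace ℝ (Fin n)) → ℝ} (hu : Mn u) {x0 : EuclideanSpace ℝ (Fin n)} {t : ℝ} (ht : 0 < t)
    (hb : closedBall x0 t ⊆ ball 0 1) (hp : ∀ x ∈ closedBall x0 t, 0 < u x) :
    ∫ x in ball (0 : EuclideanSpace ℝ (Fin n)) 1, inner ℝ (gradient u (x0 + t • x)) x = 0 := by
  set φ : (EuclideanSpace ℝ (Fin n)) → ℝ := fun y => max (t ^ 2 - ‖y - x0‖ ^ 2) 0 with hφ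
  have φ0 : ∀ y, 0 ≤ φ y := fun y => le_max_right _ _
  have φl : LocallyLipschitz φ := by
    refine LocallyLipschitz.max_const ?_ 0
    refine ContDiff.locallyLipschitz (𝕂 := ℝ) ?_
    exact contDiff_const.sub ((contDiff_id.sub contDiff_const).norm_sq ℝ)
  have φz : ∀ y, y ∉ ball x0 t → φ y = 0 := by
    intro y hy
    refine max_eq_right ?_
    rw [mem_ball, dist_eq_norm, not_lt] at hy
    have := pow_le_pow_left₀ ht.le hy 2
    linarith
  obtain ⟨z, hz, hzm⟩ := (isCompact_closedBall x0 t).exists_isMinOn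
    (nonempty_closedBall.2 ht.le) hu.2.1.continuous.continuousOn
  have hw := weak hu φl (hp z hz) (M := t ^ 2) (fun y => by
    rw [abs_of_nonneg (φ0 y)]
    refine max_le ?_ (by positivity)
    have := sq_nonneg ‖y - x0‖
    linarith) (fun y hy => by
    have : y ∈ closedBall x0 t := by
      by_contra hc
      exact hy (φz y fun h => hc (ball_subset_closedBall h))
    exact ⟨hb this, hzm this⟩)
  have gz : ∀ y, y ∉ ball x0 t → gradient φ y = 0 := fun y hy => grad_zero φ0 (φz y hy)
  have gb : ∀ y ∈ ball x0 t, gradient φ y = (-2 : ℝ) • (y - x0) := by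
    intro y hy
    have ev : φ =ᶠ[nhds y] fun y => t ^ 2 - ‖y - x0‖ ^ 2 := by
      filter_upwards [isOpen_ball.mem_nhds hy] with a ha
      refine max_eq_left ?_
      rw [mem_ball, dist_eq_norm] at ha
      have := pow_le_pow_left₀ (norm_nonneg _) ha.le 2
      linarith
    have hd : HasFDerivAt (fun y : EuclideanSpace ℝ (Fin n) => t ^ 2 - ‖y - x0‖ ^ 2) (-(2 • innerSL ℝ (y - x0))) y := by
      have := ((hasStrictFDerivAt_norm_sq (y - x0)).hasFDerivAt.comp y ((hasFDerivAt_id y).sub_const x0)).const_sub (t ^ 2)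
      exact this
    refine ext_inner_right ℝ fun z => ?_
    rw [inner_grad, ev.fderiv_eq, hd.fderiv, inner_smul_left]
    simp [inner_sub_left]
  rw [setIntegral_eq_integral_of_forall_compl_eq_zero] at hw
  swap
  · intro x hx
    rw [gz x fun h => hx (hb (ball_subset_closedBall h)), inner_zero_right]
  have h3 : ∫ x : EuclideanSpace ℝ (Fin n), inner ℝ (gradient u (x0 + t • x)) (gradient φ (x0 + t • x)) = 0 := by
    have := Measure.integral_comp_smul (volume : Measure (EuclideanSpace ℝ (Fin n)))
      (fun x => inner ℝ (gradient u (x0 + x)) (gradient φ (x0 + x))) t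
    rw [this, integral_add_left_eq_self (fun x => inner ℝ (gradient u x) (gradient φ x)) x0, hw, smul_zero]
  have h4 : (fun x : EuclideanSpace ℝ (Fin n) => inner ℝ (gradient u (x0 + t • x)) (gradient φ (x0 + t • x))) =
      indicator (ball (0 : EuclideanSpace ℝ (Fin n)) 1) (fun x => (-2 * t) * inner ℝ (gradient u (x0 + t • x)) x) := by
    funext x
    have hm : x0 + t • x ∈ ball x0 t ↔ x ∈ ball (0 : EuclideanSpace ℝ (Fin n)) 1 := by
      simp [norm_smul, abs_of_pos ht, ht]
    by_cases hx : x ∈ ball (0 : EuclideanSpace ℝ (Fin n)) 1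
    · rw [indicator_of_mem hx, gb _ (hm.2 hx)]
      simp only [add_sub_cancel_left, inner_smul_right]
      ring
    · rw [indicator_of_notMem hx, gz _ (fun h => hx (hm.1 h)), inner_zero_right]
  rw [h4, integral_indicator measurableSet_ball, integral_const_mul] at h3
  rcases mul_eq_zero.1 h3 with h | h
  · linarith
  · exact h

lemma mv {u : (EuclideanSpace ℝ (Fin n)) → ℝ} (hu : Mn u) {x0 : EuclideanSpace ℝ (Fin n)} {T : ℝ} (hT : 0 < T)
    (hb : closedBall x0 T ⊆ ball 0 1) (hp : ∀ x ∈ closedBall x0 T, 0 < u x) :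
    ∫ x in closedBall (0 : EuclideanSpace ℝ (Fin n)) 1, u (x0 + T • x) = ∫ _x in closedBall (0 : EuclideanSpace ℝ (Fin n)) 1, u x0 := by
  set M : ℝ → ℝ := fun t => ∫ x in closedBall (0 : EuclideanSpace ℝ (Fin n)) 1, u (x0 + t • x) with hM
  have hcu := hu.2.1.continuous
  have hc : Continuous M := by
    refine continuous_parametric_integral_of_continuous (f := fun t x => u (x0 + t • x)) ?_ (isCompact_closedBall _ _)
    exact hcu.comp (by fun_prop)
  obtain ⟨K, hK⟩ := (hu.2.1.locallyLipschitzOn (s := closedBall x0 T)).exists_lipschitzOnWith_of_compact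
      (isCompact_closedBall x0 T)
  have hd : ∀ t ∈ Ioo 0 T, HasDerivAt M 0 t := by
    intro t ht
    have hsub : closedBall x0 t ⊆ closedBall x0 T := closedBall_subset_closedBall ht.2.le
    have h0 := weak_ball hu ht.1 (hsub.trans hb) (fun x hx => hp x (hsub hx))
    have h0' : ∫ x in closedBall (0 : EuclideanSpace ℝ (Fin n)) 1, inner ℝ (gradient u (x0 + t • x)) x = 0 := by
      rw [← h0]
      refine setIntegral_congr_set (ae_eq_of_subset_of_measure_ge ball_subset_closedBall ?_
        measurableSet_ball.nullMeasurableSet isBounded_closedBall.measure_lt_top.ne).symm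
      rw [Measure.addHaar_unitClosedBall_eq_addHaar_unitBall]
    rw [← h0']
    have hmem : ∀ s ∈ Ioo 0 T, ∀ x ∈ closedBall (0 : EuclideanSpace ℝ (Fin n)) 1, x0 + s • x ∈ closedBall x0 T := by
      intro s hs x hx
      rw [mem_closedBall, dist_zero_right] at hx
      simp only [mem_closedBall, dist_self_add_left, norm_smul, Real.norm_eq_abs, abs_of_pos hs.1]
      nlinarith [hs.1, hs.2]
    refine (hasDerivAt_integral_of_dominated_loc_of_lip (𝕜 := ℝ) (F := fun t x => u (x0 + t • x))
      (μ := volume.restrict (closedBall (0 : EuclideanSpace ℝ (Fin n)) 1)) (bound := fun _ => (K : ℝ)) (Ioo_mem_nhds ht.1 ht.2) ?_ ?_ ?_ ?_ ?_ ?_).2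
    · refine Eventually.of_forall fun s => ?_
      exact (hcu.comp (by fun_prop : Continuous fun x : EuclideanSpace ℝ (Fin n) => x0 + s • x)).aestronglyMeasurable
    · exact (hcu.comp (by fun_prop : Continuous fun x : EuclideanSpace ℝ (Fin n) => x0 + t • x)).continuousOn.integrableOn_compact (isCompact_closedBall _ _)
    · exact (((meas_grad u).comp (by fun_prop : Measurable fun x : EuclideanSpace ℝ (Fin n) => x0 + t • x)).inner measurable_id).aestronglyMeasurable
    · refine (ae_restrict_iff' measurableSet_closedBall).2 (ae_of_all _ fun x hx => ?_)
      refine LipschitzOnWith.of_dist_le_mul fun a ha b hb => ?_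
      refine (hK.dist_le_mul _ (hmem a ha x hx) _ (hmem b hb x hx)).trans ?_
      rw [mem_closedBall, dist_zero_right] at hx
      rw [dist_add_left, dist_eq_norm, ← sub_smul, norm_smul, ← dist_eq_norm]
      simp only [Real.coe_nnabs, NNReal.abs_eq]
      have : dist a b * ‖x‖ ≤ dist a b * 1 := by gcongr
      rw [mul_one] at this
      gcongr
    · exact integrableOn_const (isBounded_closedBall.measure_lt_top).ne
    · have hq : Measure.QuasiMeasurePreserving (fun x : EuclideanSpace ℝ (Fin n) => x0 + t • x) volume volume :=
        (measurePreserving_add_left volume x0).quasiMeasurePreserving.comp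
          (Measure.quasiMeasurePreserving_smul volume ht.1.ne')
      refine ae_restrict_of_ae ?_
      filter_upwards [hq.ae (ae_diff hu.2.1)] with x hx
      rw [inner_grad]
      have : HasDerivAt (fun s : ℝ => x0 + s • x) x t := by
        simpa using ((hasDerivAt_id t).smul_const x).const_add x0
      exact hx.hasFDerivAt.comp_hasDerivAt t this
  have h1 : M T = M 0 := by
    by_contra hne
    obtain ⟨c, hc, hce⟩ := exists_hasDerivAt_eq_slope M (fun _ => 0) hT hc.continuousOn hd
    rw [eq_comm, _root_.div_eq_zero_iff] at hce
    rcases hce with h | h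
    · exact hne (by linarith)
    · linarith
  simpa [hM] using h1

lemma smp {u v : (EuclideanSpace ℝ (Fin n)) → ℝ} (hu : Mn u) (hv : Mn v) (hle : ∀ x, u x ≤ v x) {x0 : EuclideanSpace ℝ (Fin n)}
    (hx0 : x0 ∈ ball (0 : EuclideanSpace ℝ (Fin n)) 1) (hpos : 0 < u x0) (heq : u x0 = v x0) :
    ∀ᶠ x in nhds x0, u x = v x := by
  have hcu := hu.2.1.continuous
  have hcv := hv.2.1.continuous
  have hO : IsOpen (ball (0 : EuclideanSpace ℝ (Fin n)) 1 ∩ {x | 0 < u x}) := isOpen_ball.inter (isOpen_lt continuous_const hcu)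
  obtain ⟨T, hT, hTs⟩ := Metric.nhds_basis_closedBall.mem_iff.1 (hO.mem_nhds ⟨hx0, hpos⟩)
  have h1 := mv hu hT (fun x hx => (hTs hx).1) (fun x hx => (hTs hx).2)
  have h2 := mv hv hT (fun x hx => (hTs hx).1) (fun x hx => (hTs hx).2.trans_le (hle x))
  have c1 : Continuous fun x : EuclideanSpace ℝ (Fin n) => u (x0 + T • x) := hcu.comp (by fun_prop)
  have c2 : Continuous fun x : EuclideanSpace ℝ (Fin n) => v (x0 + T • x) := hcv.comp (by fun_prop)
  have i1 := c1.continuousOn.integrableOn_compact (μ := volume) (isCompact_closedBall (0 : EuclideanSpace ℝ (Fin n)) 1)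
  have i2 := c2.continuousOn.integrableOn_compact (μ := volume) (isCompact_closedBall (0 : EuclideanSpace ℝ (Fin n)) 1)
  have h3 : ∫ x in closedBall (0 : EuclideanSpace ℝ (Fin n)) 1, (v (x0 + T • x) - u (x0 + T • x)) = 0 := by
    rw [integral_sub i2 i1, h1, h2, heq, sub_self]
  rw [integral_eq_zero_iff_of_nonneg (fun x => sub_nonneg.2 (hle _)) (i2.sub i1)] at h3
  have h4 := Measure.eqOn_open_of_ae_eq (ae_restrict_of_ae_restrict_of_subset ball_subset_closedBall h3) isOpen_ball
    (c2.sub c1).continuousOn continuousOn_const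
  filter_upwards [ball_mem_nhds x0 hT] with y hy
  have hm : T⁻¹ • (y - x0) ∈ ball (0 : EuclideanSpace ℝ (Fin n)) 1 := by
    rw [mem_ball, dist_eq_norm] at hy
    rw [mem_ball, dist_zero_right, norm_smul, norm_inv, Real.norm_of_nonneg hT.le, inv_mul_lt_iff₀ hT]
    linarith
  have h5 := h4 hm
  simp only [smul_inv_smul₀ hT.ne', add_sub_cancel, Pi.zero_apply] at h5
  linarith

end AC

/-- comparison principle in an annulus. -/
theorem stmt1 {n : ℕ} (hn : 2 ≤ n) (u w : EuclideanSpace ℝ (Fin n) → ℝ)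
    (hu : IsMinimizer (Metric.ball (0 : EuclideanSpace ℝ (Fin n)) 1) u)
    (hw : IsMinimizer (Metric.ball (0 : EuclideanSpace ℝ (Fin n)) 1) w)
    (ε : ℝ) (hε0 : 0 < ε) (hε1 : ε < 1)
    (hbd : ∀ x ∉ Metric.ball (0 : EuclideanSpace ℝ (Fin n)) (1 - ε), w x ≤ u x) :
    ∀ x, w x ≤ u x := by
  have mu := AC.Mn_of hu
  have mw := AC.Mn_of hw
  have hin : ∀ x, u x < w x → x ∈ ball (0 : EuclideanSpace ℝ (Fin n)) (1 - ε) := fun x hx => by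
    by_contra hc
    exact absurd (hbd x hc) (not_le.2 hx)
  have hsub : closedBall (0 : EuclideanSpace ℝ (Fin n)) (1 - ε) ⊆ ball 0 1 :=
    closedBall_subset_ball (by linarith)
  obtain ⟨mv, hI⟩ := AC.Mn_max mu mw (fun x hx => hsub (ball_subset_closedBall (hin x hx)))
  set v : EuclideanSpace ℝ (Fin n) → ℝ := fun y => max (u y) (w y) with hv
  have huv : ∀ x, u x ≤ v x := fun x => le_max_left _ _
  have hin' : ∀ x, u x < v x → x ∈ ball (0 : EuclideanSpace ℝ (Fin n)) (1 - ε) := fun x hx =>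
    hin x (by simpa [hv] using hx)
  have cu := mu.2.1.continuous
  have cv := mv.2.1.continuous
  have oD : IsOpen {x | u x < v x} := isOpen_lt cu cv
  have oC : IsOpen ({x | u x < v x} ∩ {x | 0 < u x}) := oD.inter (isOpen_lt continuous_const cu)
  have hfr : ∀ y ∈ frontier ({x | u x < v x} ∩ {x | 0 < u x}), u y = 0 := by
    intro y hy
    by_contra hne
    have hp : 0 < u y := lt_of_le_of_ne (mu.1 y) (Ne.symm hne)
    rw [oC.frontier_eq] at hy
    have hyb : y ∈ ball (0 : EuclideanSpace ℝ (Fin n)) 1 :=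
      hsub (closure_minimal (fun x hx => ball_subset_closedBall (hin' x hx.1)) isClosed_closedBall hy.1)
    have heq : u y = v y := le_antisymm (huv y) (not_lt.1 fun h => hy.2 ⟨h, hp⟩)
    have ev := AC.smp mu mv huv hyb hp heq
    obtain ⟨z, hz1, hz2⟩ := mem_closure_iff_nhds.1 hy.1 _ ev
    exact hz2.1.ne hz1
  have hC : {x | u x < v x} ∩ {x | 0 < u x} = ∅ := by
    have hl := AC.trunc mu.2.1 hfr
    have h0 : ∀ x, 0 ≤ indicator ({x | u x < v x} ∩ {x | 0 < u x})ᶜ u x := fun x =>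
      indicator_nonneg (fun y _ => mu.1 y) x
    have hCb : {x | u x < v x} ∩ {x | 0 < u x} ⊆ ball 0 1 := fun x hx =>
      hsub (ball_subset_closedBall (hin' x hx.1))
    refine AC.empty_of hl mu.2.1 h0 (fun x => indicator_le_self' (fun y _ => mu.1 y) x) oC hCb
      (fun x hx => indicator_of_mem hx u) (fun x hx => indicator_of_notMem (not_not_intro hx) u)
      (fun x hx => hx.2) ?_
    refine mu.2.2 _ h0 hl fun x hx => hCb ?_
    by_contra hc
    exact hx (indicator_of_mem hc u)
  have hD : {x | u x < v x} = ∅ := by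
    refine AC.empty_of mu.2.1 mv.2.1 mu.1 huv oD (fun x hx => hsub (ball_subset_closedBall (hin' x hx)))
      (fun x hx => le_antisymm (huv x) (not_lt.1 hx)) (fun x hx => ?_)
      (fun x hx => (mu.1 x).trans_lt hx) hI
    by_contra hne
    have : x ∈ {x | u x < v x} ∩ {x | 0 < u x} := ⟨hx, lt_of_le_of_ne (mu.1 x) (Ne.symm hne)⟩
    rw [hC] at this
    exact this
  intro x
  by_contra hc
  have : x ∈ {x | u x < v x} := by
    simpa [hv] using hc
  rw [hD] at this
  exact this
end

section
/- Uniqueness with boundary data U₀: if w is a minimizer of J in the open unit ball B₁ and w(x) = U₀(x) for all x ∈ ℝⁿ \ B₁, then w = U₀ everywhere on ℝⁿ. -/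
open MeasureTheory Metric Set Filter ENNReal NNReal

abbrev EE (n : ℕ) := EuclideanSpace ℝ (Fin n)

lemma exists_lip {n : ℕ} {u : EE n → ℝ} (hu : LocallyLipschitz u) (c : EE n) (R : ℝ) :
    ∃ K, LipschitzOnWith K u (closedBall c R) :=
  (hu.locallyLipschitzOn).exists_lipschitzOnWith_of_compact (isCompact_closedBall c R)

lemma ae_diff {n : ℕ} {u : EE n → ℝ} (hu : LocallyLipschitz u) :
    ∀ᵐ x, DifferentiableAt ℝ u x := by
  have : ∀ k : ℕ, ∀ᵐ x, x ∈ ball (0 : EE n) k → DifferentiableAt ℝ u x := by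
    intro k
    obtain ⟨K, hK⟩ := exists_lip hu 0 k
    filter_upwards [(hK.mono ball_subset_closedBall).ae_differentiableWithinAt_of_mem
      (μ := volume)] with x hx hxb
    exact (hx hxb).differentiableAt (isOpen_ball.mem_nhds hxb)
  rw [← ae_all_iff] at this
  filter_upwards [this] with x hx
  obtain ⟨k, hk⟩ := exists_nat_gt ‖x‖
  exact hx k (by simpa using hk)

lemma norm_gradient {n : ℕ} (u : EE n → ℝ) (x : EE n) : ‖gradient u x‖ = ‖fderiv ℝ u x‖ := by
  simp [gradient]

lemma gradient_bound {n : ℕ} {u : EE n → ℝ} (hu : LocallyLipschitz u) (R : ℝ) :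
    ∃ K : ℝ≥0, ∀ x ∈ ball (0 : EE n) R, ‖gradient u x‖ ≤ K := by
  obtain ⟨K, hK⟩ := exists_lip hu 0 R
  refine ⟨K, fun x hx => ?_⟩
  rw [norm_gradient]
  exact norm_fderiv_le_of_lipschitzOn ℝ
    (mem_of_superset (isOpen_ball.mem_nhds hx) ball_subset_closedBall) hK

lemma gradient_meas {n : ℕ} (u : EE n → ℝ) : Measurable (gradient u) := by
  have := measurable_fderiv ℝ u
  exact (InnerProductSpace.toDual ℝ (EE n)).symm.continuous.measurable.comp this

lemma ind_meas {n : ℕ} {u : EE n → ℝ} (hu : LocallyLipschitz u) :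
    Measurable (fun x => if 0 < u x then (1 : ℝ≥0∞) else 0) :=
  Measurable.ite (measurableSet_lt measurable_const hu.continuous.measurable)
    measurable_const measurable_const

lemma integrand_meas {n : ℕ} {u : EE n → ℝ} (hu : LocallyLipschitz u) :
    Measurable (fun x => (‖gradient u x‖₊ : ℝ≥0∞) ^ 2 + if 0 < u x then 1 else 0) :=
  ((gradient_meas u).nnnorm.coe_nnreal_ennreal.pow_const 2).add (ind_meas hu)

lemma JE_lt_top {n : ℕ} {u : EE n → ℝ} (hu : LocallyLipschitz u) (R : ℝ) :
    JE (ball 0 R) u < ∞ := by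
  obtain ⟨K, hK⟩ := gradient_bound hu R
  refine lt_of_le_of_lt (setLIntegral_mono (g := fun _ => (K : ℝ≥0∞) ^ 2 + 1)
    measurable_const ?_) ?_
  · intro x hx
    have : ‖gradient u x‖₊ ≤ K := hK x hx
    gcongr
    split_ifs <;> simp
  · rw [setLIntegral_const]
    exact ENNReal.mul_lt_top (by simp) measure_ball_lt_top

/-- gradients agree where `f ≤ g` touch -/
lemma gradient_touch {n : ℕ} {f g : EE n → ℝ} {x : EE n} (hf : DifferentiableAt ℝ f x)
    (hg : DifferentiableAt ℝ g x) (hle : ∀ y, f y ≤ g y) (he : f x = g x) :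
    gradient f x = gradient g x := by
  have hm : IsLocalMin (fun y => g y - f y) x := by
    filter_upwards with y
    have := hle y
    linarith
  have h0 := hm.fderiv_eq_zero
  rw [fderiv_fun_sub hg hf, sub_eq_zero] at h0
  simp [gradient, h0]

lemma gradient_congr {n : ℕ} {f g : EE n → ℝ} {x : EE n} (h : f =ᶠ[nhds x] g) :
    gradient f x = gradient g x := by
  simp [gradient, h.fderiv_eq]

lemma JE_max_min {n : ℕ} {u w : EE n → ℝ} (hu : LocallyLipschitz u) (hw : LocallyLipschitz w)
    (D : Set (EE n)) :
    JE D (fun x => max (u x) (w x)) + JE D (fun x => min (u x) (w x)) = JE D u + JE D w := by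
  unfold JE
  have hM := hu.max hw
  have hm := hu.min hw
  rw [← lintegral_add_left (integrand_meas hM), ← lintegral_add_left (integrand_meas hu)]
  apply lintegral_congr_ae
  apply ae_restrict_of_ae
  filter_upwards [ae_diff hu, ae_diff hw, ae_diff hM, ae_diff hm] with x h1 h2 h3 h4
  rcases lt_trichotomy (u x) (w x) with h | h | h
  · have hev : ∀ᶠ y in nhds x, u y < w y :=
      hu.continuous.continuousAt.eventually_lt hw.continuous.continuousAt h
    rw [gradient_congr (f := fun x => max (u x) (w x)) (g := w)
        (hev.mono fun y hy => max_eq_right hy.le),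
      gradient_congr (f := fun x => min (u x) (w x)) (g := u)
        (hev.mono fun y hy => min_eq_left hy.le)]
    simp only [max_eq_right h.le, min_eq_left h.le]
    rw [add_comm]
  · rw [← gradient_touch h1 h3 (fun y => le_max_left _ _) (by simp [h]),
      gradient_touch h4 h2 (fun y => min_le_right _ _) (by simp [h])]
    simp [h]
  · have hev : ∀ᶠ y in nhds x, w y < u y :=
      hw.continuous.continuousAt.eventually_lt hu.continuous.continuousAt h
    rw [gradient_congr (f := fun x => max (u x) (w x)) (g := u)
        (hev.mono fun y hy => max_eq_left hy.le),
      gradient_congr (f := fun x => min (u x) (w x)) (g := w)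
        (hev.mono fun y hy => min_eq_right hy.le)]
    simp only [max_eq_left h.le, min_eq_right h.le]

/-- weak form of being a global minimizer: only large balls centered at `0`. -/
def WMin {n : ℕ} (u : EE n → ℝ) : Prop :=
  (∀ x, 0 ≤ u x) ∧ LocallyLipschitz u ∧
  ∀ v : EE n → ℝ, (∀ x, 0 ≤ v x) → LocallyLipschitz v → ∀ R : ℝ, 1 ≤ R →
    {x | v x ≠ u x} ⊆ ball 0 R → JE (ball 0 R) u ≤ JE (ball 0 R) v

lemma WMin.of_isMinimizer {n : ℕ} {u : EE n → ℝ} (h : IsMinimizer univ u) : WMin u := by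
  refine ⟨h.1, h.2.1, fun v hv hvl R _ hR => ?_⟩
  simpa using h.2.2 v hv hvl (isBounded_ball.subset hR) (subset_univ _) 0 R hR

lemma JE_w_le {n : ℕ} {u w : EE n → ℝ} (hu : IsMinimizer univ u)
    (hw : IsMinimizer (ball 0 1) w) (hbd : ∀ x ∉ ball (0 : EE n) 1, w x = u x) (R : ℝ)
    (hR : 1 ≤ R) : JE (ball 0 R) w ≤ JE (ball 0 R) u := by
  have hsub : {x | u x ≠ w x} ⊆ ball (0 : EE n) 1 := by
    intro x hx
    by_contra hx'
    exact hx (hbd x hx').symm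
  have h1 := hw.2.2 u hu.1 hu.2.1 (isBounded_ball.subset hsub) hsub 0 1 hsub
  rw [inter_self] at h1
  have hRR : ball (0 : EE n) 1 ⊆ ball 0 R := ball_subset_ball hR
  unfold JE at h1 ⊢
  rw [← lintegral_inter_add_sdiff (μ := volume) _ (ball (0 : EE n) R) (measurableSet_ball (x := (0 : EE n)) (ε := 1)),
    ← lintegral_inter_add_sdiff (μ := volume) (fun x => (‖gradient u x‖₊ : ℝ≥0∞) ^ 2 + if 0 < u x then 1 else 0)
      (ball (0 : EE n) R) (measurableSet_ball (x := (0 : EE n)) (ε := 1)),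
    inter_eq_right.mpr hRR]
  refine add_le_add h1 (le_of_eq ?_)
  refine setLIntegral_congr_fun_ae (measurableSet_ball.diff measurableSet_ball) ?_
  have hs : volume (sphere (0 : EE n) 1) = 0 := Measure.addHaar_sphere_of_ne_zero _ _ one_ne_zero
  filter_upwards [compl_mem_ae_iff.mpr hs] with x hx hxR
  have hx1 : x ∈ (closedBall (0 : EE n) 1)ᶜ := by
    have h2 := hxR.2
    simp only [mem_compl_iff, mem_sphere, mem_closedBall, mem_ball, not_lt, not_le] at *
    exact lt_of_le_of_ne h2 (Ne.symm hx)
  have hev : w =ᶠ[nhds x] u := by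
    filter_upwards [isClosed_closedBall.isOpen_compl.mem_nhds hx1] with y hy
    exact hbd y fun hy' => hy (ball_subset_closedBall hy')
  rw [gradient_congr hev, hev.eq_of_nhds]

lemma WMin.w {n : ℕ} {u w : EE n → ℝ} (hu : IsMinimizer univ u)
    (hw : IsMinimizer (ball 0 1) w) (hbd : ∀ x ∉ ball (0 : EE n) 1, w x = u x) : WMin w := by
  refine ⟨hw.1, hw.2.1, fun v hv hvl R h1 hR => ?_⟩
  refine (JE_w_le hu hw hbd R h1).trans ?_
  refine (WMin.of_isMinimizer hu).2.2 v hv hvl R h1 ?_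
  intro x hx
  by_contra hxR
  have : x ∉ ball (0 : EE n) 1 := fun h => hxR (ball_subset_ball h1 h)
  refine hxR (hR ?_)
  simp only [mem_ofPred_eq, hbd x this] at *
  exact hx

lemma WMin.max {n : ℕ} {u w : EE n → ℝ} (hu : WMin u) (hw : WMin w)
    (hbd : ∀ x ∉ ball (0 : EE n) 1, w x = u x) : WMin (fun x => max (u x) (w x)) := by
  refine ⟨fun x => le_max_of_le_left (hu.1 x), hu.2.1.max hw.2.1, fun v hv hvl R h1 hR => ?_⟩
  have hsub : {x | v x ≠ w x} ⊆ ball 0 R := by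
    intro x hx
    by_contra hxR
    have : x ∉ ball (0 : EE n) 1 := fun h => hxR (ball_subset_ball h1 h)
    refine hxR (hR ?_)
    simp only [mem_ofPred_eq, ← hbd x this, max_self] at *
    exact hx
  have hsub2 : {x | min (u x) (w x) ≠ u x} ⊆ ball 0 R := by
    intro x hx
    by_contra hxR
    have : x ∉ ball (0 : EE n) 1 := fun h => hxR (ball_subset_ball h1 h)
    simp [hbd x this] at hx
  have hmin := hu.2.2 _ (fun x => le_min (hu.1 x) (hw.1 x)) (hu.2.1.min hw.2.1) R h1 hsub2
  have hv' := hw.2.2 v hv hvl R h1 hsub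
  refine le_trans ?_ hv'
  have hsum := JE_max_min hu.2.1 hw.2.1 (ball 0 R)
  have hfin := (JE_lt_top (hu.2.1.min hw.2.1) R).ne
  refine (ENNReal.add_le_add_iff_right hfin).mp ?_
  rw [hsum, add_comm]
  gcongr

lemma grad_sq_integrable {n : ℕ} {u : EE n → ℝ} (hu : LocallyLipschitz u) (R : ℝ) :
    IntegrableOn (fun x => ‖gradient u x‖ ^ 2) (ball 0 R) := by
  obtain ⟨K, hK⟩ := gradient_bound hu R
  refine Measure.integrableOn_of_bounded (M := (K : ℝ) ^ 2) measure_ball_lt_top.ne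
    ((gradient_meas u).norm.pow_const 2).aestronglyMeasurable ?_
  filter_upwards [ae_restrict_mem measurableSet_ball] with x hx
  rw [Real.norm_of_nonneg (by positivity)]
  have := hK x hx
  gcongr

lemma JE_eq {n : ℕ} {u : EE n → ℝ} (hu : LocallyLipschitz u) (R : ℝ) :
    JE (ball 0 R) u = ENNReal.ofReal (∫ x in ball (0 : EE n) R, ‖gradient u x‖ ^ 2) +
      ∫⁻ x in ball (0 : EE n) R, (if 0 < u x then 1 else 0) := by
  unfold JE
  rw [lintegral_add_left ((gradient_meas u).nnnorm.coe_nnreal_ennreal.pow_const 2)]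
  congr 1
  rw [ofReal_integral_eq_lintegral_ofReal (grad_sq_integrable hu R)
    (Eventually.of_forall fun x => by positivity)]
  refine lintegral_congr fun x => ?_
  rw [ENNReal.ofReal_pow (norm_nonneg _), ofReal_norm]
  rfl

lemma quad_zero {a b ε : ℝ} (hε : 0 < ε) (h : ∀ t : ℝ, |t| ≤ ε → 0 ≤ 2 * t * a + t ^ 2 * b) :
    a = 0 := by
  by_contra ha
  have hb : 0 ≤ |b| := abs_nonneg b
  have ha' : 0 < |a| := abs_pos.mpr ha
  set s := min ε (|a| / (|b| + 1)) with hs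
  have hs0 : 0 < s := lt_min hε (by positivity)
  have hs1 : s ≤ ε := min_le_left _ _
  have hs2 : s * (|b| + 1) ≤ |a| := by
    have := min_le_right ε (|a| / (|b| + 1))
    rwa [← hs, le_div_iff₀ (by positivity)] at this
  have hbb : s * b ≤ s * |b| := mul_le_mul_of_nonneg_left (le_abs_self b) hs0.le
  rcases lt_or_gt_of_ne ha with h0 | h0
  · have h1 := h s (by rwa [abs_of_pos hs0])
    rw [abs_of_neg h0] at hs2 ha'
    have : 0 ≤ s * (2 * a + s * b) := by linarith
    have := nonneg_of_mul_nonneg_right this hs0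
    linarith
  · have h1 := h (-s) (by rwa [abs_neg, abs_of_pos hs0])
    rw [abs_of_pos h0] at hs2 ha'
    have : 0 ≤ s * (-2 * a + s * b) := by linarith
    have := nonneg_of_mul_nonneg_right this hs0
    linarith

/-- cut-off paraboloid -/
noncomputable def phi {n : ℕ} (x0 : EE n) (r : ℝ) (x : EE n) : ℝ :=
  max 0 ((r ^ 2 - ‖x - x0‖ ^ 2) / 2)

lemma phi_lip {n : ℕ} (x0 : EE n) (r : ℝ) : LocallyLipschitz (phi x0 r) := by
  have : ContDiff ℝ 1 (fun x : EE n => (r ^ 2 - ‖x - x0‖ ^ 2) / 2) := by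
    have h : ContDiff ℝ 1 (fun x : EE n => ‖x - x0‖ ^ 2) :=
      (contDiff_id.sub contDiff_const).norm_sq ℝ
    fun_prop
  exact this.locallyLipschitz.const_max 0

lemma phi_out {n : ℕ} (x0 : EE n) {r : ℝ} (hr : 0 < r) {x : EE n} (hx : x ∉ closedBall x0 r) :
    phi x0 r x = 0 := by
  rw [mem_closedBall, not_le, dist_eq_norm] at hx
  unfold phi
  apply max_eq_left
  nlinarith

lemma phi_grad {n : ℕ} (x0 : EE n) {r : ℝ} (hr : 0 < r) :
    ∀ᵐ x, HasGradientAt (phi x0 r)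
      ((closedBall x0 r).indicator (fun x => -(x - x0)) x) x := by
  have hs : volume (sphere x0 r) = 0 := Measure.addHaar_sphere_of_ne_zero _ _ hr.ne'
  filter_upwards [compl_mem_ae_iff.mpr hs] with x hx
  by_cases hxc : x ∈ closedBall x0 r
  · have hxb : x ∈ ball x0 r := by
      simp only [mem_compl_iff, mem_sphere, mem_closedBall, mem_ball] at *
      exact lt_of_le_of_ne hxc hx
    rw [indicator_of_mem hxc]
    have hev : phi x0 r =ᶠ[nhds x] fun x => (1 / 2 : ℝ) * (r ^ 2 - ‖x - x0‖ ^ 2) := by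
      filter_upwards [isOpen_ball.mem_nhds hxb] with y hy
      rw [mem_ball, dist_eq_norm] at hy
      refine (max_eq_right ?_).trans (by ring)
      have := norm_nonneg (y - x0)
      nlinarith
    rw [hasGradientAt_iff_hasFDerivAt]
    refine HasFDerivAt.congr_of_eventuallyEq ?_ hev
    have h1 : HasFDerivAt (fun x : EE n => ‖x - x0‖ ^ 2) _ x :=
      ((hasFDerivAt_id x).sub_const x0).norm_sq
    have h2 := (h1.const_sub (r ^ 2)).const_mul (1 / 2 : ℝ)
    refine h2.congr_fderiv ?_
    ext y
    simp [InnerProductSpace.toDual_apply_apply]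
  · rw [indicator_of_notMem hxc]
    have hev : phi x0 r =ᶠ[nhds x] fun x => 0 := by
      filter_upwards [isClosed_closedBall.isOpen_compl.mem_nhds hxc] with y hy
      exact phi_out x0 hr hy
    rw [hasGradientAt_iff_hasFDerivAt]
    refine HasFDerivAt.congr_of_eventuallyEq ?_ hev
    rw [map_zero]
    exact hasFDerivAt_const _ _

lemma first_var {n : ℕ} {u : EE n → ℝ} (hu : WMin u) (x0 : EE n) {r : ℝ} (hr : 0 < r)
    (hpos : ∀ x ∈ closedBall x0 r, 0 < u x) :
    ∫ x in closedBall x0 r, inner ℝ (gradient u x) (x - x0) = 0 := by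
  obtain ⟨p, hp, hpm⟩ := (isCompact_closedBall x0 r).exists_isMinOn ⟨x0, by simp [hr.le]⟩
    hu.2.1.continuous.continuousOn
  set m := u p with hm
  have hm0 : 0 < m := hpos p hp
  set R : ℝ := max 1 (‖x0‖ + r + 1) with hR
  have hR1 : 1 ≤ R := le_max_left _ _
  have hsub : closedBall x0 r ⊆ ball (0 : EE n) R := by
    intro x hx
    rw [mem_closedBall, dist_eq_norm] at hx
    rw [mem_ball_zero_iff]
    have h1 : ‖x0‖ + r + 1 ≤ R := le_max_right _ _
    have h2 : ‖x‖ ≤ ‖x - x0‖ + ‖x0‖ := by simpa using norm_add_le (x - x0) x0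
    linarith
  set g : EE n → EE n := (closedBall x0 r).indicator (fun x => -(x - x0)) with hg
  have hgm : Measurable g :=
    Measurable.indicator (by fun_prop) measurableSet_closedBall
  have hgb : ∀ x, ‖g x‖ ≤ r := by
    intro x
    by_cases hx : x ∈ closedBall x0 r
    · rw [hg, indicator_of_mem hx, norm_neg, ← dist_eq_norm]; exact hx
    · rw [hg, indicator_of_notMem hx, norm_zero]; exact hr.le
  obtain ⟨K, hK⟩ := gradient_bound hu.2.1 R
  have hint1 := grad_sq_integrable hu.2.1 R
  have hint2 : IntegrableOn (fun x => inner ℝ (gradient u x) (g x)) (ball 0 R) := by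
    refine Measure.integrableOn_of_bounded (M := K * r) measure_ball_lt_top.ne
      ((gradient_meas u).inner hgm).aestronglyMeasurable ?_
    filter_upwards [ae_restrict_mem measurableSet_ball] with x hx
    refine (norm_inner_le_norm _ _).trans ?_
    exact mul_le_mul (hK x hx) (hgb x) (norm_nonneg _) K.2
  have hint3 : IntegrableOn (fun x => ‖g x‖ ^ 2) (ball 0 R) := by
    refine Measure.integrableOn_of_bounded (M := r ^ 2) measure_ball_lt_top.ne
      (hgm.norm.pow_const 2).aestronglyMeasurable ?_
    filter_upwards with x
    rw [Real.norm_of_nonneg (by positivity)]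
    have := hgb x
    gcongr
  have hkey : ∀ t : ℝ, |t| ≤ m / r ^ 2 →
      0 ≤ 2 * t * (∫ x in ball (0 : EE n) R, inner ℝ (gradient u x) (g x)) +
        t ^ 2 * ∫ x in ball (0 : EE n) R, ‖g x‖ ^ 2 := by
    intro t ht
    rw [le_div_iff₀ (by positivity)] at ht
    set v : EE n → ℝ := fun x => u x + t * phi x0 r x with hv
    have hφl := phi_lip x0 r
    have hvl : LocallyLipschitz v := by
      refine hu.2.1.add ?_
      have : LipschitzWith (Real.nnabs t) (fun y : ℝ => t * y) := by
        refine LipschitzWith.of_dist_le_mul fun a b => ?_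
        simp [Real.dist_eq, ← mul_sub, abs_mul]
      exact this.locallyLipschitz.comp hφl
    have hin : ∀ x ∈ closedBall x0 r, 0 < v x := by
      intro x hx
      have h1 : m ≤ u x := hpm hx
      have h2 : 0 ≤ phi x0 r x := le_max_left _ _
      have h3 : phi x0 r x ≤ r ^ 2 / 2 := by
        refine max_le (by positivity) ?_
        have := sq_nonneg ‖x - x0‖
        linarith
      have h4 : -(|t| * phi x0 r x) ≤ t * phi x0 r x := by
        rw [← neg_mul]
        exact mul_le_mul_of_nonneg_right (neg_abs_le t) h2
      have h5 : |t| * phi x0 r x ≤ |t| * (r ^ 2 / 2) :=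
        mul_le_mul_of_nonneg_left h3 (abs_nonneg t)
      simp only [hv]
      linarith
    have hout : ∀ x ∉ closedBall x0 r, v x = u x := by
      intro x hx
      simp [hv, phi_out x0 hr hx]
    have hv0 : ∀ x, 0 ≤ v x := by
      intro x
      by_cases hx : x ∈ closedBall x0 r
      · exact (hin x hx).le
      · rw [hout x hx]; exact hu.1 x
    have hJ := hu.2.2 v hv0 hvl R hR1 (by
      intro x hx
      by_contra hxR
      exact hx (hout x fun h => hxR (hsub h)))
    rw [JE_eq hu.2.1, JE_eq hvl] at hJ
    have hite : ∀ x, (if 0 < v x then (1 : ℝ≥0∞) else 0) = if 0 < u x then 1 else 0 := by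
      intro x
      by_cases hx : x ∈ closedBall x0 r
      · rw [if_pos (hin x hx), if_pos (hpos x hx)]
      · rw [hout x hx]
    simp only [hite] at hJ
    have hfin : ∫⁻ x in ball (0 : EE n) R, (if 0 < u x then (1 : ℝ≥0∞) else 0) ≠ ∞ := by
      have := JE_lt_top hu.2.1 R
      rw [JE_eq hu.2.1] at this
      exact (lt_of_le_of_lt le_add_self this).ne
    rw [ENNReal.add_le_add_iff_right hfin, ENNReal.ofReal_le_ofReal_iff
      (integral_nonneg fun x => by positivity)] at hJ
    have hgv : ∫ x in ball (0 : EE n) R, ‖gradient v x‖ ^ 2 =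
        ∫ x in ball (0 : EE n) R, (‖gradient u x‖ ^ 2 + 2 * t * inner ℝ (gradient u x) (g x)
          + t ^ 2 * ‖g x‖ ^ 2) := by
      refine integral_congr_ae (ae_restrict_of_ae ?_)
      filter_upwards [ae_diff hu.2.1, phi_grad x0 hr] with x h1 h2
      have h3 : HasGradientAt v (gradient u x + t • g x) x := by
        rw [hasGradientAt_iff_hasFDerivAt] at h2 ⊢
        have h1' := h1.hasGradientAt
        rw [hasGradientAt_iff_hasFDerivAt] at h1'
        refine (h1'.add (h2.const_mul t)).congr_fderiv ?_
        simp [hg]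
      rw [h3.gradient, norm_add_sq_real, inner_smul_right, norm_smul, mul_pow, Real.norm_eq_abs,
        sq_abs]
      ring
    have hint12 : IntegrableOn (fun x => ‖gradient u x‖ ^ 2 +
        2 * t * inner ℝ (gradient u x) (g x)) (ball 0 R) := hint1.add (hint2.const_mul _)
    rw [hgv, integral_add hint12 (hint3.const_mul _),
      integral_add hint1 (hint2.const_mul _), integral_const_mul, integral_const_mul] at hJ
    linarith
  have h0 := quad_zero (by positivity) hkey
  have h1 : ∀ x, inner ℝ (gradient u x) (g x) =
      (closedBall x0 r).indicator (fun x => -inner ℝ (gradient u x) (x - x0)) x := by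
    intro x
    by_cases hx : x ∈ closedBall x0 r
    · simp only [hg, indicator_of_mem hx, inner_neg_right]
    · simp only [hg, indicator_of_notMem hx, inner_zero_right]
  simp only [h1] at h0
  rw [setIntegral_indicator measurableSet_closedBall, inter_eq_right.mpr hsub,
    integral_neg, neg_eq_zero] at h0
  exact h0

lemma quasi {n : ℕ} (x0 : EE n) {s : ℝ} (hs : s ≠ 0) :
    Measure.QuasiMeasurePreserving (fun y : EE n => x0 + s • y) volume volume := by
  have h1 : Measure.QuasiMeasurePreserving (fun y : EE n => s • y) volume volume := by
    refine ⟨by fun_prop, ?_⟩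
    rw [Measure.map_addHaar_smul _ hs]
    exact Measure.smul_absolutelyContinuous
  exact (measurePreserving_add_left volume x0).quasiMeasurePreserving.comp h1

lemma int_scale {n : ℕ} (G : EE n → EE n) (x0 : EE n) {s : ℝ} (hs : 0 < s)
    (h : ∫ x in closedBall x0 s, inner ℝ (G x) (x - x0) = 0) :
    ∫ y in closedBall (0 : EE n) 1, inner ℝ (G (x0 + s • y)) y = 0 := by
  have h1 : ∫ z in closedBall (0 : EE n) s, inner ℝ (G (x0 + z)) z = 0 := by
    rw [← h, ← (measurePreserving_add_left volume x0).setIntegral_preimage_emb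
      (measurableEmbedding_addLeft x0) (fun x => inner ℝ (G x) (x - x0)) (closedBall x0 s)]
    have : (fun x => x0 + x) ⁻¹' closedBall x0 s = closedBall 0 s := by
      ext; simp
    rw [this]
    simp
  have h2 := Measure.setIntegral_comp_smul_of_pos volume
    (fun z : EE n => inner ℝ (G (x0 + z)) z) (closedBall (0 : EE n) 1) hs
  rw [_root_.smul_closedBall _ _ zero_le_one, smul_zero, Real.norm_of_nonneg hs.le, mul_one, h1,
    smul_zero] at h2
  simp only [inner_smul_right] at h2
  rw [integral_const_mul] at h2
  exact (mul_eq_zero.mp h2).resolve_left hs.ne'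

lemma mean_value {n : ℕ} {u : EE n → ℝ} (hu : WMin u) (x0 : EE n) (h0 : 0 < u x0) :
    ∃ ρ > 0, ∀ s : ℝ, 0 < s → s < ρ →
      ∫ y in closedBall (0 : EE n) 1, u (x0 + s • y) =
        ∫ y in closedBall (0 : EE n) 1, u x0 := by
  have hc := hu.2.1.continuous
  have hev : ∀ᶠ x in nhds x0, 0 < u x := hc.continuousAt.eventually_const_lt h0
  obtain ⟨ρ, hρ, hball⟩ := Metric.eventually_nhds_iff_ball.mp hev
  refine ⟨ρ, hρ, ?_⟩
  set A : ℝ → ℝ := fun s => ∫ y in closedBall (0 : EE n) 1, u (x0 + s • y) with hA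
  have hAc : Continuous A :=
    continuous_parametric_integral_of_continuous (f := fun (s : ℝ) y => u (x0 + s • y))
      (by simp only [Function.uncurry_def]; fun_prop) (isCompact_closedBall _ _)
  obtain ⟨K, hK⟩ := exists_lip hu.2.1 x0 ρ
  have hder : ∀ s ∈ Ioo 0 ρ, HasDerivAt A 0 s := by
    intro s hs
    have hz := int_scale (gradient u) x0 hs.1 (first_var hu x0 hs.1 fun x hx =>
      hball x (closedBall_subset_ball hs.2 hx))
    rw [← hz]
    refine (hasDerivAt_integral_of_dominated_loc_of_lip (bound := fun _ => (K : ℝ))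
      (F := fun (s : ℝ) y => u (x0 + s • y)) (Ioo_mem_nhds hs.1 hs.2) ?_ ?_ ?_ ?_ ?_ ?_).2
    · filter_upwards with t
      exact (by fun_prop : Continuous fun y => u (x0 + t • y)).aestronglyMeasurable
    · exact (by fun_prop : Continuous fun y => u (x0 + s • y)).continuousOn.integrableOn_compact
        (isCompact_closedBall _ _)
    · refine Measurable.aestronglyMeasurable ?_
      exact ((gradient_meas u).comp (by fun_prop)).inner measurable_id
    · filter_upwards [ae_restrict_mem measurableSet_closedBall] with y hy
      rw [mem_closedBall_zero_iff] at hy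
      have hmem : ∀ t ∈ Ioo 0 ρ, x0 + t • y ∈ closedBall x0 ρ := by
        intro t ht
        rw [mem_closedBall, dist_eq_norm, add_sub_cancel_left, norm_smul,
          Real.norm_of_nonneg ht.1.le]
        nlinarith [ht.1, ht.2, norm_nonneg y]
      refine LipschitzOnWith.of_dist_le_mul fun a ha b hb => ?_
      refine (hK.dist_le_mul _ (hmem a ha) _ (hmem b hb)).trans ?_
      simp only [Real.coe_nnabs, NNReal.abs_eq]
      refine mul_le_mul_of_nonneg_left ?_ K.2
      rw [dist_add_left, dist_eq_norm, ← sub_smul, norm_smul, ← dist_eq_norm]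
      exact mul_le_of_le_one_right dist_nonneg hy
    · exact integrableOn_const measure_closedBall_lt_top.ne
    · refine ae_restrict_of_ae ?_
      filter_upwards [(quasi x0 hs.1.ne').ae (ae_diff hu.2.1)] with y hy
      have h1 := hasGradientAt_iff_hasFDerivAt.mp hy.hasGradientAt
      have h2 : HasDerivAt (fun t : ℝ => x0 + t • y) ((1 : ℝ) • y) s :=
        ((hasDerivAt_id s).smul_const y).const_add x0
      have h3 := h1.comp_hasDerivAt s h2
      rw [one_smul, InnerProductSpace.toDual_apply_apply] at h3
      exact h3
  intro s hs hsρ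
  have hd : DifferentiableOn ℝ A (Ioo 0 s) := fun t ht =>
    (hder t ⟨ht.1, ht.2.trans hsρ⟩).differentiableAt.differentiableWithinAt
  obtain ⟨c, hc, hc2⟩ := exists_deriv_eq_slope A hs hAc.continuousOn hd
  rw [(hder c ⟨hc.1, hc.2.trans hsρ⟩).deriv, sub_zero, eq_comm, _root_.div_eq_zero_iff] at hc2
  have := hc2.resolve_right hs.ne'
  have h4 : A 0 = ∫ y in closedBall (0 : EE n) 1, u x0 := by simp [hA]
  rw [← h4]
  linarith

lemma zero_lemma {n : ℕ} {f g : EE n → ℝ} (hf : Continuous f) (hg : Continuous g) (x0 : EE n)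
    (h0 : f x0 = g x0) (hle : ∀ᶠ x in nhds x0, f x ≤ g x)
    (hmf : ∃ ρ > 0, ∀ s : ℝ, 0 < s → s < ρ →
      ∫ y in closedBall (0 : EE n) 1, f (x0 + s • y) = ∫ y in closedBall (0 : EE n) 1, f x0)
    (hmg : ∃ ρ > 0, ∀ s : ℝ, 0 < s → s < ρ →
      ∫ y in closedBall (0 : EE n) 1, g (x0 + s • y) = ∫ y in closedBall (0 : EE n) 1, g x0) :
    ∀ᶠ x in nhds x0, f x = g x := by
  obtain ⟨ρ1, h1, hf1⟩ := hmf
  obtain ⟨ρ2, h2, hg1⟩ := hmg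
  obtain ⟨ρ3, h3, hb⟩ := Metric.eventually_nhds_iff_ball.mp hle
  obtain ⟨s, hs0, hs⟩ := exists_between (lt_min h1 (lt_min h2 h3))
  rw [lt_min_iff, lt_min_iff] at hs
  have cf : Continuous fun y : EE n => f (x0 + s • y) := by fun_prop
  have cg : Continuous fun y : EE n => g (x0 + s • y) := by fun_prop
  have hif : IntegrableOn (fun y : EE n => f (x0 + s • y)) (closedBall 0 1) :=
    cf.continuousOn.integrableOn_compact (isCompact_closedBall _ _)
  have hig : IntegrableOn (fun y : EE n => g (x0 + s • y)) (closedBall 0 1) :=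
    cg.continuousOn.integrableOn_compact (isCompact_closedBall _ _)
  have hint : ∫ y in closedBall (0 : EE n) 1, (g (x0 + s • y) - f (x0 + s • y)) = 0 := by
    rw [integral_sub hig hif, hf1 s hs0 hs.1, hg1 s hs0 hs.2.1, h0, sub_self]
  have hid : IntegrableOn (fun y : EE n => g (x0 + s • y) - f (x0 + s • y)) (closedBall 0 1) :=
    hig.sub hif
  rw [setIntegral_eq_zero_iff_of_nonneg_ae ?_ hid] at hint
  · have hE := Measure.eqOn_open_of_ae_eq
      (ae_restrict_of_ae_restrict_of_subset ball_subset_closedBall hint) isOpen_ball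
      (cg.sub cf).continuousOn continuousOn_const
    filter_upwards [ball_mem_nhds x0 hs0] with x hx
    have hx1 : s⁻¹ • (x - x0) ∈ ball (0 : EE n) 1 := by
      rw [mem_ball, dist_eq_norm] at hx
      rw [mem_ball_zero_iff, norm_smul, norm_inv, Real.norm_of_nonneg hs0.le,
        inv_mul_lt_iff₀ hs0, mul_one]
      exact hx
    have := hE hx1
    simp only [smul_smul, mul_inv_cancel₀ hs0.ne', one_smul, add_sub_cancel, Pi.zero_apply] at this
    linarith
  · filter_upwards [ae_restrict_mem measurableSet_closedBall] with y hy
    rw [mem_closedBall_zero_iff] at hy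
    have := hb (x0 + s • y) (by
      rw [mem_ball, dist_eq_norm, add_sub_cancel_left, norm_smul, Real.norm_of_nonneg hs0.le]
      nlinarith [hs.2.2, norm_nonneg y])
    simp only [Pi.zero_apply]
    linarith

/-- strong maximum principle on a bounded clopen piece of `{u > 0}`. -/
lemma no_piece {n : ℕ} (hn : 2 ≤ n) {u : EE n → ℝ} (hu : WMin u) (E : Set (EE n)) (hE : IsOpen E)
    (hbdd : Bornology.IsBounded E) (hpos : ∀ x ∈ E, 0 < u x)
    (hcl : ∀ x ∈ closure E, 0 < u x → x ∈ E) : E = ∅ := by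
  by_contra hne
  rw [← ne_eq, ← nonempty_iff_ne_empty] at hne
  have hc := hu.2.1.continuous
  have hcomp : IsCompact (closure E) := hbdd.isCompact_closure
  obtain ⟨p, hp, hpm⟩ := hcomp.exists_isMaxOn hne.closure hc.continuousOn
  obtain ⟨q, hq⟩ := hne
  have hup : 0 < u p := lt_of_lt_of_le (hpos q hq) (hpm (subset_closure hq))
  set P : Set (EE n) := closure E ∩ u ⁻¹' {u p} with hP
  have hPclosed : IsClosed P := isClosed_closure.inter (isClosed_singleton.preimage hc)
  have hPopen : IsOpen P := by
    rw [isOpen_iff_mem_nhds]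
    rintro x ⟨hx, hxp⟩
    have hxp : u x = u p := hxp
    have hxE : x ∈ E := hcl x hx (hxp ▸ hup)
    have hz := zero_lemma hc (continuous_const (y := u p)) x hxp
      (by filter_upwards [hE.mem_nhds hxE] with y hy using hpm (subset_closure hy))
      (mean_value hu x (hxp ▸ hup)) ⟨1, one_pos, fun _ _ _ => rfl⟩
    filter_upwards [hz, hE.mem_nhds hxE] with y hy hyE
    exact ⟨subset_closure hyE, hy⟩
  have hPu : P = univ := IsClopen.eq_univ ⟨hPclosed, hPopen⟩ ⟨p, hp, rfl⟩
  have hcu : IsCompact (univ : Set (EE n)) := hPu ▸ hcomp.of_isClosed_subset hPclosed inter_subset_left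
  have : Nonempty (Fin n) := ⟨⟨0, by omega⟩⟩
  have : Nontrivial (EE n) := inferInstance
  have : NoncompactSpace (EE n) := NormedSpace.noncompactSpace ℝ (EE n)
  exact noncompact_univ (EE n) hcu

lemma agree {n : ℕ} (hn : 2 ≤ n) {u w : EE n → ℝ} (hu : WMin u) (hw : WMin w)
    (hbd : ∀ x ∉ ball (0 : EE n) 1, w x = u x) (hM : WMin (fun x => max (u x) (w x))) :
    ∀ x, 0 < u x → w x = u x := by
  have hcu := hu.2.1.continuous
  have hcw := hw.2.1.continuous
  have hE := no_piece hn hu ({x | 0 < u x} ∩ {x | w x ≠ u x})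
    ((isOpen_lt continuous_const hcu).inter (isOpen_ne_fun hcw hcu))
    ((isBounded_ball (x := (0 : EE n)) (r := 1)).subset (by
      rintro x ⟨_, hx⟩
      by_contra h
      exact hx (hbd x h)))
    (fun x hx => hx.1) (by
      intro x hx hxp
      refine ⟨hxp, fun he => ?_⟩
      have hmx : max (u x) (w x) = u x := by rw [he, max_self]
      have hm := mean_value hM x (by rw [hmx]; exact hxp)
      have z1 := zero_lemma hcu hM.2.1.continuous x hmx.symm
        (Eventually.of_forall fun y => le_max_left _ _) (mean_value hu x hxp) hm
      have z2 := zero_lemma hcw hM.2.1.continuous x (hmx.trans he.symm).symm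
        (Eventually.of_forall fun y => le_max_right _ _) (mean_value hw x (he ▸ hxp)) hm
      obtain ⟨y, hy, hyE⟩ := mem_closure_iff_nhds.mp hx _ (z1.and z2)
      exact hyE.2 (hy.2.trans hy.1.symm))
  intro x hx
  by_contra h
  have : x ∈ ({x | 0 < u x} ∩ {x | w x ≠ u x}) := ⟨hx, h⟩
  rw [hE] at this
  exact this

/-- uniqueness of the minimizer with boundary data `U₀`. -/
theorem stmt3 {n : ℕ} (hn : 2 ≤ n) (U₀ : EuclideanSpace ℝ (Fin n) → ℝ)
    (hU₀min : IsMinimizer (Set.univ : Set (EuclideanSpace ℝ (Fin n))) U₀)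
    (hU₀ne : U₀ ≠ 0)
    (hU₀hom : ∀ t : ℝ, 0 < t → ∀ x, U₀ (t • x) = t * U₀ x)
    (w : EuclideanSpace ℝ (Fin n) → ℝ)
    (hw : IsMinimizer (Metric.ball (0 : EuclideanSpace ℝ (Fin n)) 1) w)
    (hbd : ∀ x ∉ Metric.ball (0 : EuclideanSpace ℝ (Fin n)) 1, w x = U₀ x) :
    ∀ x, w x = U₀ x := by
  have hu := WMin.of_isMinimizer hU₀min
  have hw' := WMin.w hU₀min hw hbd
  have hM := WMin.max hu hw' hbd
  have hbd' : ∀ x ∉ ball (0 : EE n) 1, U₀ x = w x := fun x hx => (hbd x hx).symm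
  have hM' : WMin (fun x => max (w x) (U₀ x)) := by
    simpa only [max_comm] using hM
  intro x
  by_cases h1 : 0 < U₀ x
  · exact agree hn hu hw' hbd hM x h1
  · by_cases h2 : 0 < w x
    · exact (agree hn hw' hu hbd' hM' x h2).symm
    · have h3 := hu.1 x
      have h4 := hw'.1 x
      linarith
end
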